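/- arXiv:1806.03571 — 5 statements merged into one kernel-verified Lean document; each statement's English description precedes it below -/
import Mathlib

section
/- For any two symmetric positive definite real r×r matrices A and B, det(A) · det(B) ≤ det((A+B)/2)². (In particular, the quantity 1 − det(AB)^{1/4}/det((A+B)/2)^{1/2} appearing in the Gaussian Hellinger distance formula is nonnegative.) -/
open Matrix

lemma det_half_one_add {r : ℕ} (C : Matrix (Fin r) (Fin r) ℝ) (hC : C.PosDef) :
    C.det ≤ (((1 : ℝ) / 2) • (1 + C)).det ^ 2 := by
  have h1 : (1 + C).det = ∏ i, (1 + hC.1.eigenvalues i) := by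
    have h2 := congrArg (Polynomial.eval (-1)) hC.1.charpoly_eq
    rw [Matrix.eval_charpoly, Polynomial.eval_prod] at h2
    have h3 : (Matrix.scalar (Fin r)) (-1 : ℝ) - C = -(1 + C) := by
      rw [map_neg, map_one]; abel
    rw [h3, Matrix.det_neg] at h2
    have h4 : ∀ i, Polynomial.eval (-1 : ℝ) (Polynomial.X - Polynomial.C (hC.1.eigenvalues i))
        = (-1) * (1 + hC.1.eigenvalues i) := by
      intro i; simp; ring
    simp only [RCLike.ofReal_real_eq_id, id, h4] at h2
    rw [Finset.prod_mul_distrib, Finset.prod_const, Finset.card_univ] at h2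
    exact mul_left_cancel₀ (by simp) h2
  rw [Matrix.det_smul, h1, hC.1.det_eq_prod_eigenvalues, ← Finset.card_univ, ← Finset.prod_const,
    ← Finset.prod_mul_distrib, ← Finset.prod_pow]
  refine Finset.prod_le_prod (fun i _ => (hC.eigenvalues_pos i).le) fun i _ => ?_
  simp only [RCLike.ofReal_real_eq_id, id]
  nlinarith [sq_nonneg (1 - hC.1.eigenvalues i)]

/-- For symmetric positive definite real `r × r` matrices `A` and `B`,
`det A · det B ≤ det((A+B)/2)²`. -/
theorem stmt_1 {r : ℕ} (A B : Matrix (Fin r) (Fin r) ℝ)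
    (hA : A.PosDef) (hB : B.PosDef) :
    A.det * B.det ≤ (((1 : ℝ) / 2) • (A + B)).det ^ 2 := by
  obtain ⟨S, hS⟩ : ∃ S : Matrix (Fin r) (Fin r) ℝ, A = Sᴴ * S := by
    open scoped MatrixOrder in
    exact CStarAlgebra.nonneg_iff_eq_star_mul_self.mp hA.posSemidef.nonneg
  have hdA := hA.det_pos
  have hdS : IsUnit S.det := by
    rw [isUnit_iff_ne_zero]
    intro h
    rw [hS, Matrix.det_mul, h, mul_zero] at hdA
    exact lt_irrefl _ hdA
  have hdS' : IsUnit Sᴴ.det := by simpa using hdS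
  have hC : ((S⁻¹)ᴴ * B * S⁻¹).PosDef := by
    refine hB.conjTranspose_mul_mul_same ?_
    apply Matrix.mulVec_injective_of_isUnit
    exact (Matrix.isUnit_nonsing_inv_iff).2 ((Matrix.isUnit_iff_isUnit_det _).2 hdS)
  generalize hCd : (S⁻¹)ᴴ * B * S⁻¹ = C at hC
  have hBC : B = Sᴴ * C * S := by
    rw [← hCd, Matrix.conjTranspose_nonsing_inv]
    simp only [Matrix.mul_assoc, Matrix.nonsing_inv_mul _ hdS, Matrix.mul_one]
    rw [← Matrix.mul_assoc, Matrix.mul_nonsing_inv _ hdS', Matrix.one_mul]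
  have hAB : ((1 : ℝ) / 2) • (A + B) = Sᴴ * (((1 : ℝ) / 2) • (1 + C)) * S := by
    rw [hBC, hS]
    simp [Matrix.mul_add, Matrix.add_mul]
  rw [hAB, hBC, hS]
  simp only [Matrix.det_mul]
  have := mul_le_mul_of_nonneg_left (det_half_one_add C hC) (sq_nonneg (Sᴴ.det * S.det))
  nlinarith [this]
end

section
/- Let G₁ and G₂ be simple graphs on the vertex set {1,…,p} whose maximum vertex degree is at most d, with adjacency matrices E₁ and E₂. Let θ > 0 satisfy dθ < 1 and set J₁ = I + θE₁ and J₂ = I + θE₂. Then (1/2) Tr( (J₁ − J₂)(J₂⁻¹ − J₁⁻¹) ) ≤ p d ( θ/(1−dθ) )². -/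
open Matrix

lemma aux_low {p : ℕ} (d : ℕ) (θ : ℝ) (hθ : 0 < θ)
    (G : SimpleGraph (Fin p)) [DecidableRel G.Adj] (hd : ∀ v, G.degree v ≤ d) (y : Fin p → ℝ) :
    (1 - d * θ) * ∑ i, y i ^ 2 ≤ ∑ i, y i * ((1 + θ • G.adjMatrix ℝ) *ᵥ y) i := by
  have hrow : ∀ i, ∑ j, G.adjMatrix ℝ i j ≤ d := by
    intro i
    have h1 : ∑ j, G.adjMatrix ℝ i j = (G.degree i : ℝ) := by
      simp [SimpleGraph.adjMatrix_apply, ← SimpleGraph.card_neighborFinset_eq_degree,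
        SimpleGraph.neighborFinset_eq_filter]
    rw [h1]; exact_mod_cast hd i
  have hnn : ∀ i j, 0 ≤ G.adjMatrix ℝ i j := by
    intro i j; rw [SimpleGraph.adjMatrix_apply]; split_ifs <;> norm_num
  have hsymm : ∀ i j, G.adjMatrix ℝ i j = G.adjMatrix ℝ j i := by
    intro i j; simp [SimpleGraph.adjMatrix_apply, G.adj_comm]
  have hA : ∑ i, ∑ j, G.adjMatrix ℝ i j * y i ^ 2 ≤ d * ∑ i, y i ^ 2 := by
    rw [Finset.mul_sum]
    refine Finset.sum_le_sum fun i _ => ?_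
    rw [← Finset.sum_mul]
    exact mul_le_mul_of_nonneg_right (hrow i) (sq_nonneg _)
  have hB : ∑ i, ∑ j, G.adjMatrix ℝ i j * y j ^ 2 = ∑ i, ∑ j, G.adjMatrix ℝ i j * y i ^ 2 := by
    rw [Finset.sum_comm]
    refine Finset.sum_congr rfl fun i _ => Finset.sum_congr rfl fun j _ => ?_
    rw [hsymm]
  have hC : 0 ≤ ∑ i, ∑ j, G.adjMatrix ℝ i j * (y i + y j) ^ 2 :=
    Finset.sum_nonneg fun i _ => Finset.sum_nonneg fun j _ => mul_nonneg (hnn i j) (sq_nonneg _)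
  have hD : ∑ i, ∑ j, G.adjMatrix ℝ i j * (y i + y j) ^ 2 =
      ∑ i, ∑ j, G.adjMatrix ℝ i j * y i ^ 2 + ∑ i, ∑ j, G.adjMatrix ℝ i j * y j ^ 2 +
        2 * ∑ i, y i * (G.adjMatrix ℝ *ᵥ y) i := by
    simp only [Matrix.mulVec, dotProduct, Finset.mul_sum, ← Finset.sum_add_distrib]
    refine Finset.sum_congr rfl fun i _ => Finset.sum_congr rfl fun j _ => ?_
    ring
  have hE : ∑ i, y i * ((1 + θ • G.adjMatrix ℝ) *ᵥ y) i =
      ∑ i, y i ^ 2 + θ * ∑ i, y i * (G.adjMatrix ℝ *ᵥ y) i := by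
    rw [Finset.mul_sum, ← Finset.sum_add_distrib]
    refine Finset.sum_congr rfl fun i _ => ?_
    rw [Matrix.add_mulVec, Matrix.one_mulVec, Matrix.smul_mulVec]
    simp only [Pi.add_apply, Pi.smul_apply, smul_eq_mul]; ring
  rw [hE]
  have : 0 ≤ θ * (∑ i, y i * (G.adjMatrix ℝ *ᵥ y) i + d * ∑ i, y i ^ 2) :=
    mul_nonneg hθ.le (by linarith)
  linarith

lemma aux_sq {p : ℕ} (d : ℕ) (θ : ℝ) (hθ : 0 < θ) (hdθ : (d : ℝ) * θ < 1)
    (G : SimpleGraph (Fin p)) [DecidableRel G.Adj] (hd : ∀ v, G.degree v ≤ d) (y : Fin p → ℝ) :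
    (1 - d * θ) ^ 2 * ∑ i, y i ^ 2 ≤ ∑ i, ((1 + θ • G.adjMatrix ℝ) *ᵥ y) i ^ 2 := by
  have h := aux_low d θ hθ G hd y
  set x := (1 + θ • G.adjMatrix ℝ) *ᵥ y
  have hc : 0 < 1 - d * θ := by linarith
  set c := 1 - d * θ
  have h0 : 0 ≤ ∑ i, (x i - c * y i) ^ 2 := Finset.sum_nonneg fun i _ => sq_nonneg _
  have h1 : ∑ i, (x i - c * y i) ^ 2 =
      ∑ i, x i ^ 2 - 2 * c * ∑ i, y i * x i + c ^ 2 * ∑ i, y i ^ 2 := by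
    simp only [Finset.mul_sum, ← Finset.sum_add_distrib, ← Finset.sum_sub_distrib]
    refine Finset.sum_congr rfl fun i _ => ?_
    ring
  nlinarith [mul_le_mul_of_nonneg_left h hc.le]

lemma aux_unit {p : ℕ} (d : ℕ) (θ : ℝ) (hθ : 0 < θ) (hdθ : (d : ℝ) * θ < 1)
    (G : SimpleGraph (Fin p)) [DecidableRel G.Adj] (hd : ∀ v, G.degree v ≤ d) :
    IsUnit (1 + θ • G.adjMatrix ℝ).det := by
  rw [← Matrix.isUnit_iff_isUnit_det, ← Matrix.mulVec_injective_iff_isUnit]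
  intro a b hab
  have h := aux_sq d θ hθ hdθ G hd (a - b)
  have h0 : (1 + θ • G.adjMatrix ℝ) *ᵥ (a - b) = 0 := by
    rw [Matrix.mulVec_sub]; exact sub_eq_zero.2 hab
  rw [h0] at h
  simp only [Pi.zero_apply, ne_eq, OfNat.ofNat_ne_zero, not_false_eq_true, zero_pow,
    Finset.sum_const_zero] at h
  have hc : 0 < (1 - d * θ) ^ 2 := by have : 0 < 1 - d * θ := by linarith
                                      positivity
  have h2 : ∑ i, (a - b) i ^ 2 ≤ 0 := by
    by_contra! h3
    have := mul_pos hc h3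
    linarith
  have h3 := (Finset.sum_eq_zero_iff_of_nonneg (fun i _ => sq_nonneg ((a - b) i))).1
    (le_antisymm h2 (Finset.sum_nonneg fun i _ => sq_nonneg _))
  funext i
  have := h3 i (Finset.mem_univ i)
  have := pow_eq_zero_iff (two_ne_zero) |>.1 this
  simpa [sub_eq_zero] using this

lemma aux_frob {p : ℕ} (d : ℕ) (θ : ℝ) (hθ : 0 < θ) (hdθ : (d : ℝ) * θ < 1)
    (G : SimpleGraph (Fin p)) [DecidableRel G.Adj] (hd : ∀ v, G.degree v ≤ d)
    (D : Matrix (Fin p) (Fin p) ℝ) :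
    (1 - d * θ) ^ 2 * ∑ j, ∑ i, ((1 + θ • G.adjMatrix ℝ)⁻¹ * D) i j ^ 2 ≤
      ∑ j, ∑ i, D i j ^ 2 := by
  rw [Finset.mul_sum]
  refine Finset.sum_le_sum fun j _ => ?_
  have h := aux_sq d θ hθ hdθ G hd (fun i => ((1 + θ • G.adjMatrix ℝ)⁻¹ * D) i j)
  have h2 : (1 + θ • G.adjMatrix ℝ) *ᵥ (fun i => ((1 + θ • G.adjMatrix ℝ)⁻¹ * D) i j) =
      fun i => D i j := by
    funext i
    have : ((1 + θ • G.adjMatrix ℝ) * ((1 + θ • G.adjMatrix ℝ)⁻¹ * D)) i j = D i j := by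
      rw [Matrix.mul_nonsing_inv_cancel_left _ _ (aux_unit d θ hθ hdθ G hd)]
    rw [← this]; rfl
  rw [h2] at h
  exact h

lemma aux_diff {p : ℕ} (d : ℕ) (θ : ℝ)
    (G₁ G₂ : SimpleGraph (Fin p)) [DecidableRel G₁.Adj] [DecidableRel G₂.Adj]
    (hd₁ : ∀ v, G₁.degree v ≤ d) (hd₂ : ∀ v, G₂.degree v ≤ d) :
    ∑ j, ∑ i, ((1 + θ • G₁.adjMatrix ℝ) - (1 + θ • G₂.adjMatrix ℝ)) i j ^ 2 ≤
      2 * (p * d * θ ^ 2) := by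
  have hrow : ∀ (G : SimpleGraph (Fin p)) [DecidableRel G.Adj] (_ : ∀ v, G.degree v ≤ d) (j),
      ∑ i, G.adjMatrix ℝ i j ≤ d := by
    intro G _ hd i
    have h1 : ∑ j, G.adjMatrix ℝ j i = (G.degree i : ℝ) := by
      simp [SimpleGraph.adjMatrix_apply, ← SimpleGraph.card_neighborFinset_eq_degree,
        SimpleGraph.neighborFinset_eq_filter, G.adj_comm]
    rw [h1]; exact_mod_cast hd i
  have : ∀ j : Fin p, ∑ i, ((1 + θ • G₁.adjMatrix ℝ) - (1 + θ • G₂.adjMatrix ℝ)) i j ^ 2 ≤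
      2 * (d * θ ^ 2) := by
    intro j
    calc _ ≤ ∑ i, θ ^ 2 * (G₁.adjMatrix ℝ i j + G₂.adjMatrix ℝ i j) := by
          refine Finset.sum_le_sum fun i _ => ?_
          have := sq_nonneg θ
          simp only [Matrix.sub_apply, Matrix.add_apply, Matrix.smul_apply, smul_eq_mul,
            SimpleGraph.adjMatrix_apply]
          split_ifs <;> nlinarith
      _ ≤ _ := by
          rw [← Finset.mul_sum, Finset.sum_add_distrib]
          nlinarith [hrow G₁ hd₁ j, hrow G₂ hd₂ j, sq_nonneg θ]
  calc _ ≤ ∑ j : Fin p, 2 * (d * θ ^ 2) := Finset.sum_le_sum fun j _ => this j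
    _ = _ := by simp; ring


/-- Bound on the symmetrized KL divergence between two Gaussian graphical models
`J₁ = I + θE₁`, `J₂ = I + θE₂` on graphs of maximum degree at most `d`, with `dθ < 1`:
`(1/2) Tr((J₁ − J₂)(J₂⁻¹ − J₁⁻¹)) ≤ p d (θ/(1−dθ))²`. -/
theorem stmt_3 {p : ℕ} (d : ℕ) (θ : ℝ) (hθ : 0 < θ) (hdθ : (d : ℝ) * θ < 1)
    (G₁ G₂ : SimpleGraph (Fin p)) [DecidableRel G₁.Adj] [DecidableRel G₂.Adj]
    (hd₁ : ∀ v, G₁.degree v ≤ d) (hd₂ : ∀ v, G₂.degree v ≤ d) :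
    (1 / 2) * Matrix.trace
        (((1 + θ • G₁.adjMatrix ℝ) - (1 + θ • G₂.adjMatrix ℝ)) *
          ((1 + θ • G₂.adjMatrix ℝ)⁻¹ - (1 + θ • G₁.adjMatrix ℝ)⁻¹)) ≤
      (p : ℝ) * d * (θ / (1 - d * θ)) ^ 2 := by
  have u₁ := aux_unit d θ hθ hdθ G₁ hd₁
  have u₂ := aux_unit d θ hθ hdθ G₂ hd₂
  have hD := aux_diff d θ G₁ G₂ hd₁ hd₂
  have f₁ := aux_frob d θ hθ hdθ G₁ hd₁ ((1 + θ • G₁.adjMatrix ℝ) - (1 + θ • G₂.adjMatrix ℝ))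
  have f₂ := aux_frob d θ hθ hdθ G₂ hd₂ ((1 + θ • G₁.adjMatrix ℝ) - (1 + θ • G₂.adjMatrix ℝ))
  generalize 1 + θ • G₁.adjMatrix ℝ = J₁ at *
  generalize 1 + θ • G₂.adjMatrix ℝ = J₂ at *
  have hinv : J₂⁻¹ - J₁⁻¹ = J₂⁻¹ * (J₁ - J₂) * J₁⁻¹ := by
    rw [Matrix.mul_sub, Matrix.sub_mul, Matrix.mul_assoc, Matrix.mul_nonsing_inv _ u₁,
      Matrix.nonsing_inv_mul _ u₂, Matrix.mul_one, Matrix.one_mul]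
  rw [hinv]
  generalize J₁ - J₂ = D at *
  have htr : Matrix.trace (D * (J₂⁻¹ * D * J₁⁻¹)) = Matrix.trace ((J₁⁻¹ * D) * (J₂⁻¹ * D)) := by
    rw [← Matrix.mul_assoc, Matrix.trace_mul_comm, Matrix.mul_assoc]
  rw [htr]
  generalize J₁⁻¹ * D = X at *
  generalize J₂⁻¹ * D = Y at *
  have hXY : 2 * Matrix.trace (X * Y) ≤ ∑ j, ∑ i, X i j ^ 2 + ∑ j, ∑ i, Y i j ^ 2 := by
    rw [Finset.sum_comm (f := fun j i => X i j ^ 2)]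
    simp only [Matrix.trace, Matrix.diag, Matrix.mul_apply, Finset.mul_sum,
      ← Finset.sum_add_distrib]
    refine Finset.sum_le_sum fun i _ => Finset.sum_le_sum fun j _ => ?_
    nlinarith [sq_nonneg (X i j - Y j i)]
  have hc : 0 < 1 - d * θ := by linarith
  rw [div_pow, ← mul_div_assoc, le_div_iff₀ (by positivity)]
  nlinarith [mul_le_mul_of_nonneg_left hXY (sq_nonneg (1 - d * θ))]
end

section
/- (Fano's inequality, version used in the paper.) Let μ₁,…,μ_M (M ≥ 2) be probability measures on a measurable space Ω that are pairwise mutually absolutely continuous with finite pairwise Kullback–Leibler divergences, let n ≥ 1, let δ ∈ (0,1), and let ψ : Ωⁿ → {1,…,M} be any measurable decoder. Write S(μ_i‖μ_j) = D(μ_i‖μ_j) + D(μ_j‖μ_i) for the symmetrized KL divergence. If n < (1−δ) · log M / ( (2/M²) Σ_{i=1}^{M} Σ_{j=i+1}^{M} S(μ_i‖μ_j) ), then max_{1≤j≤M} μ_j^{⊗n}[ ψ ≠ j ] ≥ δ − 1/log M, where μ_j^{⊗n} denotes the n-fold product measure (i.i.d. samples from μ_j). -/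
open MeasureTheory

/-- The Kullback–Leibler divergence `D(μ‖ν) = ∫ log(dμ/dν) dμ` (natural logarithm),
for `μ ≪ ν`. -/
noncomputable def KLdiv {Ω : Type*} [MeasurableSpace Ω] (μ ν : Measure Ω) : ℝ :=
  ∫ x, Real.log (μ.rnDeriv ν x).toReal ∂μ

/-- The symmetrized Kullback–Leibler divergence `S(μ‖ν) = D(μ‖ν) + D(ν‖μ)`. -/
noncomputable def symKLdiv {Ω : Type*} [MeasurableSpace Ω] (μ ν : Measure Ω) : ℝ :=
  KLdiv μ ν + KLdiv ν μ

lemma pi_eq_withDensity_aux {Ω : Type*} [MeasurableSpace Ω] (n : ℕ) (P Q : Measure Ω)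
    [IsProbabilityMeasure P] [IsProbabilityMeasure Q] (hQP : Q ≪ P) :
    (Measure.pi fun _ : Fin n => Q) = (Measure.pi fun _ : Fin n => P).withDensity
      (fun x => ENNReal.ofReal (∏ k, (Q.rnDeriv P (x k)).toReal)) := by
  apply Measure.pi_eq
  intro s hs
  have hbox : MeasurableSet (Set.univ.pi s) := MeasurableSet.univ_pi hs
  have hint : Integrable (fun x : Fin n → Ω => ∏ k, (Q.rnDeriv P (x k)).toReal)
      (Measure.pi fun _ : Fin n => P) :=
    Integrable.fintype_prod (f := fun _ x => (Q.rnDeriv P x).toReal)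
      (fun _ => Measure.integrable_toReal_rnDeriv)
  rw [withDensity_apply _ hbox, ← ofReal_integral_eq_lintegral_ofReal hint.integrableOn
    (Filter.Eventually.of_forall fun x => Finset.prod_nonneg fun _ _ => ENNReal.toReal_nonneg),
    ← integral_indicator hbox]
  have h1 : (Set.univ.pi s).indicator (fun x : Fin n → Ω => ∏ k, (Q.rnDeriv P (x k)).toReal)
      = fun x => ∏ k, (s k).indicator (fun y => (Q.rnDeriv P y).toReal) (x k) := by
    funext x
    by_cases hx : x ∈ Set.univ.pi s
    · rw [Set.indicator_of_mem hx]
      exact Finset.prod_congr rfl fun k _ => by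
        rw [Set.indicator_of_mem (hx k (Set.mem_univ k))]
    · rw [Set.indicator_of_notMem hx]
      simp only [Set.mem_pi, Set.mem_univ, true_imp_iff, not_forall] at hx
      obtain ⟨k, hk⟩ := hx
      exact (Finset.prod_eq_zero (Finset.mem_univ k) (Set.indicator_of_notMem hk _)).symm
  rw [h1, integral_fintype_prod_eq_prod (fun k => (s k).indicator
    (fun y => (Q.rnDeriv P y).toReal)), ENNReal.ofReal_prod_of_nonneg]
  · refine Finset.prod_congr rfl fun k _ => ?_
    rw [integral_indicator (hs k), Measure.setIntegral_toReal_rnDeriv hQP, ofReal_measureReal]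
  · intro k _
    exact integral_nonneg fun x => Set.indicator_nonneg (fun _ _ => ENNReal.toReal_nonneg) x

lemma key_ineq {Ω : Type*} [MeasurableSpace Ω] (n : ℕ) (P Q : Measure Ω)
    [IsProbabilityMeasure P] [IsProbabilityMeasure Q] (hQP : Q ≪ P) (hPQ : P ≪ Q)
    (hfin : Integrable (fun x => Real.log (P.rnDeriv Q x).toReal) P)
    (m : ℝ) (hm : 1 ≤ m) (A : Set (Fin n → Ω)) (hA : MeasurableSet A) :
    (Measure.pi fun _ : Fin n => P).real A * Real.log m - n * KLdiv P Q
      ≤ (m - 1) * (Measure.pi fun _ : Fin n => Q).real A := by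
  set PP := Measure.pi fun _ : Fin n => P with hPP
  set F : (Fin n → Ω) → ℝ := fun x => ∏ k, (Q.rnDeriv P (x k)).toReal with hF
  have hFint : Integrable F PP :=
    Integrable.fintype_prod (f := fun _ x => (Q.rnDeriv P x).toReal)
      (fun _ => Measure.integrable_toReal_rnDeriv)
  have hF0 : ∀ x, 0 ≤ F x := fun x => Finset.prod_nonneg fun _ _ => ENNReal.toReal_nonneg
  have hFset : ∀ B, MeasurableSet B →
      ∫ x in B, F x ∂PP = (Measure.pi fun _ : Fin n => Q).real B := by
    intro B hB
    rw [measureReal_def, pi_eq_withDensity_aux n P Q hQP, withDensity_apply _ hB,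
      ← ofReal_integral_eq_lintegral_ofReal hFint.integrableOn
        (Filter.Eventually.of_forall hF0), ENNReal.toReal_ofReal (integral_nonneg hF0)]
  have hF1 : ∫ x, F x ∂PP = 1 := by
    rw [← setIntegral_univ, hFset _ MeasurableSet.univ]; simp
  have hpos : ∀ᵐ x ∂P, Real.log (Q.rnDeriv P x).toReal = - Real.log (P.rnDeriv Q x).toReal ∧
      0 < (Q.rnDeriv P x).toReal := by
    filter_upwards [neg_llr hPQ, Measure.rnDeriv_pos' (ν := Q) hPQ,
      hPQ.ae_le (Measure.rnDeriv_lt_top P Q), Q.rnDeriv_lt_top P] with x h1 h2 h3 h4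
    exact ⟨h1.symm, ENNReal.toReal_pos h2.ne' h4.ne⟩
  have hpos' : ∀ᵐ x ∂PP, ∀ k, Real.log (Q.rnDeriv P (x k)).toReal
      = - Real.log (P.rnDeriv Q (x k)).toReal ∧ 0 < (Q.rnDeriv P (x k)).toReal :=
    ae_all_iff.2 fun k => (Measure.tendsto_eval_ae_ae (μ := fun _ : Fin n => P) (i := k)).eventually hpos
  have hLint : ∀ k : Fin n, Integrable (fun x : Fin n → Ω =>
      Real.log (P.rnDeriv Q (x k)).toReal) PP := fun k =>
    integrable_comp_eval (μ := fun _ : Fin n => P) (i := k) hfin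
  have hle : ∀ᵐ x ∂PP, A.indicator (fun _ => Real.log m) x
      - ∑ k, Real.log (P.rnDeriv Q (x k)).toReal
      ≤ (F x + (m - 1) * A.indicator F x) - 1 := by
    filter_upwards [hpos'] with x hx
    have hFx : 0 < F x := Finset.prod_pos fun k _ => (hx k).2
    have hlog : Real.log (F x) = - ∑ k, Real.log (P.rnDeriv Q (x k)).toReal := by
      rw [hF, Real.log_prod (fun k _ => (hx k).2.ne'), ← Finset.sum_neg_distrib]
      exact Finset.sum_congr rfl fun k _ => (hx k).1
    by_cases hxA : x ∈ A
    · simp only [Set.indicator_of_mem hxA]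
      have := Real.log_le_sub_one_of_pos (mul_pos (by linarith : 0 < m) hFx)
      rw [Real.log_mul (by linarith) hFx.ne', hlog] at this
      linarith
    · simp only [Set.indicator_of_notMem hxA]
      have := Real.log_le_sub_one_of_pos hFx
      rw [hlog] at this
      linarith
  have hI1 : Integrable (A.indicator (fun _ => Real.log m)) PP :=
    (integrable_const _).indicator hA
  have hI2 : Integrable (fun x : Fin n → Ω => ∑ k, Real.log (P.rnDeriv Q (x k)).toReal) PP :=
    integrable_finsetSum _ fun k _ => hLint k
  have hI3 : Integrable (fun x => (m - 1) * A.indicator F x) PP :=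
    (hFint.indicator hA).const_mul _
  have hI4 : Integrable (fun x => F x + (m - 1) * A.indicator F x) PP := hFint.add hI3
  have := integral_mono_ae (hI1.sub hI2) ((hFint.add hI3).sub (integrable_const (1 : ℝ))) hle
  simp only [Pi.sub_apply, Pi.add_apply] at this
  rw [integral_sub hI1 hI2, integral_sub hI4 (integrable_const _),
    integral_indicator hA, integral_finsetSum _ fun k _ => hLint k] at this
  rw [integral_add hFint hI3, integral_const_mul, integral_indicator hA, hFset A hA, hF1] at this
  have hk : ∀ k : Fin n, ∫ x, Real.log (P.rnDeriv Q (x k)).toReal ∂PP = KLdiv P Q := fun k =>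
    integral_comp_eval (μ := fun _ : Fin n => P) (i := k) hfin.aestronglyMeasurable
  simp only [hk] at this
  simp at this
  linarith

/-- Fano's inequality, version used in the paper: if
`n < (1−δ) log M / ((2/M²) Σ_{i<j} S(μ_i‖μ_j))`, then every measurable decoder
`ψ : Ωⁿ → {1,…,M}` is `δ`-unreliable, i.e. `max_j μ_j^{⊗n}[ψ ≠ j] ≥ δ − 1/log M`. -/
theorem stmt_5 {Ω : Type*} [MeasurableSpace Ω] (M n : ℕ) (hM : 2 ≤ M) (hn : 1 ≤ n)
    (μ : Fin M → Measure Ω) (hprob : ∀ j, IsProbabilityMeasure (μ j))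
    (hac : ∀ i j, μ i ≪ μ j)
    (hfin : ∀ i j, Integrable (fun x => Real.log ((μ i).rnDeriv (μ j) x).toReal) (μ i))
    (δ : ℝ) (hδ : δ ∈ Set.Ioo (0 : ℝ) 1)
    (ψ : (Fin n → Ω) → Fin M) (hψ : Measurable ψ)
    (hcond : (n : ℝ) < (1 - δ) * Real.log M /
      ((2 / (M : ℝ) ^ 2) * ∑ i : Fin M, ∑ j ∈ Finset.univ.filter (fun j => i < j),
        symKLdiv (μ i) (μ j))) :
    ∃ j : Fin M, ENNReal.ofReal (δ - 1 / Real.log M) ≤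
      (Measure.pi fun _ : Fin n => μ j) {x | ψ x ≠ j} := by
  have hM2 : (2 : ℝ) ≤ M := by exact_mod_cast hM
  have hn1 : (1 : ℝ) ≤ n := by exact_mod_cast hn
  have hL : 0 < Real.log M := Real.log_pos (by linarith)
  have hA : ∀ i : Fin M, MeasurableSet {x | ψ x = i} := fun i => hψ (measurableSet_singleton i)
  have key := fun i k => key_ineq n (μ i) (μ k) (hac k i) (hac i k) (hfin i k) M (by linarith)
    {x | ψ x = i} (hA i)
  have hD0 : ∀ i k, 0 ≤ KLdiv (μ i) (μ k) := by
    intro i k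
    have := key_ineq n (μ i) (μ k) (hac k i) (hac i k) (hfin i k) M (by linarith)
      ∅ MeasurableSet.empty
    simp at this
    by_contra h
    nlinarith
  have hDself : ∀ i, KLdiv (μ i) (μ i) = 0 := by
    intro i
    unfold KLdiv
    rw [integral_eq_zero_of_ae]
    filter_upwards [(μ i).rnDeriv_self] with x hx
    simp [hx]
  set T := ∑ i : Fin M, ∑ j ∈ Finset.univ.filter (fun j => i < j), symKLdiv (μ i) (μ j) with hT
  have hT0 : 0 ≤ T := Finset.sum_nonneg fun i _ => Finset.sum_nonneg fun j _ =>
    add_nonneg (hD0 _ _) (hD0 _ _)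
  have hTeq : ∑ i, ∑ k, KLdiv (μ i) (μ k) = T := by
    have e1 : T = ∑ i, ∑ j, (if i < j then KLdiv (μ i) (μ j) else 0)
        + ∑ i, ∑ j, (if i < j then KLdiv (μ j) (μ i) else 0) := by
      rw [hT, ← Finset.sum_add_distrib]
      refine Finset.sum_congr rfl fun i _ => ?_
      rw [← Finset.sum_add_distrib, Finset.sum_filter]
      refine Finset.sum_congr rfl fun j _ => ?_
      split_ifs <;> simp [symKLdiv]
    rw [e1, Finset.sum_comm (f := fun i j => if i < j then KLdiv (μ j) (μ i) else 0),
      ← Finset.sum_add_distrib]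
    refine Finset.sum_congr rfl fun i _ => ?_
    rw [← Finset.sum_add_distrib]
    refine Finset.sum_congr rfl fun j _ => ?_
    rcases lt_trichotomy i j with h | h | h
    · simp [h, h.not_gt]
    · subst h; simp [hDself]
    · simp [h, h.not_gt]
  have hTpos : 0 < T := by
    rcases hT0.eq_or_lt with h | h
    · rw [← h] at hcond
      simp at hcond
      linarith
    · exact h
  have hMsq : (0 : ℝ) < (M : ℝ) ^ 2 := by positivity
  have hc : (n : ℝ) * (2 * T) < (1 - δ) * Real.log M * (M : ℝ) ^ 2 := by
    rw [lt_div_iff₀ (by positivity)] at hcond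
    have h2 := mul_lt_mul_of_pos_right hcond hMsq
    calc (n : ℝ) * (2 * T) = n * (2 / (M : ℝ) ^ 2 * T) * (M : ℝ) ^ 2 := by field_simp
      _ < _ := h2
  by_contra! hcon
  have hp : ∀ i, (1 - δ) * Real.log M + 1 ≤
      (Measure.pi fun _ : Fin n => μ i).real {x | ψ x = i} * Real.log M := by
    intro i
    have h1 := hcon i
    have h2 : (Measure.pi fun _ : Fin n => μ i).real {x | ψ x ≠ i} < δ - 1 / Real.log M := by
      rw [ENNReal.lt_ofReal_iff_toReal_lt (measure_ne_top _ _)] at h1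
      exact h1
    have h3 : (Measure.pi fun _ : Fin n => μ i).real {x | ψ x ≠ i}
        = 1 - (Measure.pi fun _ : Fin n => μ i).real {x | ψ x = i} :=
      probReal_compl_eq_one_sub (hA i)
    rw [h3] at h2
    have h4 := mul_lt_mul_of_pos_right h2 hL
    rw [sub_mul, sub_mul, one_div, inv_mul_cancel₀ hL.ne'] at h4
    linarith
  have hrow : ∀ k, ∑ i, (Measure.pi fun _ : Fin n => μ k).real {x | ψ x = i} = 1 := by
    intro k
    have := sum_measureReal_preimage_singleton (μ := Measure.pi fun _ : Fin n => μ k)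
      (f := ψ) Finset.univ (fun i _ => hA i)
    simp only [Finset.coe_univ, Set.preimage_univ, probReal_univ] at this
    exact this
  have hsum : ∑ i, ∑ k, (((1 - δ) * Real.log M + 1) - n * KLdiv (μ i) (μ k))
      ≤ ∑ i, ∑ k, ((M : ℝ) - 1) * (Measure.pi fun _ : Fin n => μ k).real {x | ψ x = i} :=
    Finset.sum_le_sum fun i _ => Finset.sum_le_sum fun k _ => by
      linarith [key i k, hp i]
  rw [Finset.sum_comm (f := fun i k => ((M : ℝ) - 1) *
    (Measure.pi fun _ : Fin n => μ k).real {x | ψ x = i})] at hsum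
  simp only [← Finset.mul_sum, hrow, Finset.sum_sub_distrib, hTeq, Finset.sum_const,
    Finset.card_univ, Fintype.card_fin, nsmul_eq_mul] at hsum
  have : 0 < (n : ℝ) * T := by positivity
  nlinarith
end

section
/- (Finite-sample form of the necessary sample-complexity bound, Proposition 1.) Let 𝔐 be a finite set (with |𝔐| ≥ 2) of adjacency matrices of simple graphs on {1,…,p} with maximum degree at most d, let θ > 0 with dθ < 1, and for E ∈ 𝔐 let μ_E be the centered Gaussian measure on ℝ^p with precision matrix I + θE. Suppose |𝔐| ≥ m^{dp/2} for some real m > 1, let δ ∈ (0,1), and let ψ : (ℝ^p)ⁿ → 𝔐 be any measurable decoder. If n < (1−δ) · log m / ( 2 ( θ/(1−dθ) )² ), then max_{E ∈ 𝔐} μ_E^{⊗n}[ ψ ≠ E ] ≥ δ − 1/log|𝔐|. -/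
open MeasureTheory Matrix

/-- The centered Gaussian density on `ℝ^p` with precision matrix `J`:
`f_J(x) = (det J)^{1/2} (2π)^{-p/2} exp(-(1/2) xᵀ J x)`. -/
noncomputable def gaussDensity {p : ℕ} (J : Matrix (Fin p) (Fin p) ℝ) (x : Fin p → ℝ) : ℝ :=
  J.det ^ ((1 : ℝ) / 2) * (2 * Real.pi) ^ (-(p : ℝ) / 2) *
    Real.exp (-(1 / 2) * (x ⬝ᵥ J.mulVec x))

/-- The centered Gaussian measure on `ℝ^p` with precision matrix `J`. -/
noncomputable def gaussMeasure {p : ℕ} (J : Matrix (Fin p) (Fin p) ℝ) :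
    Measure (Fin p → ℝ) :=
  volume.withDensity fun x => ENNReal.ofReal (gaussDensity J x)

lemma aux_pi_withDensity {ι : Type*} [Fintype ι] {α : ι → Type*} [∀ i, MeasurableSpace (α i)]
    (μ : ∀ i, Measure (α i)) [∀ i, SigmaFinite (μ i)] (f : ∀ i, α i → ℝ)
    (hf0 : ∀ i x, 0 ≤ f i x) (hfi : ∀ i, Integrable (f i) (μ i)) :
    Measure.pi (fun i => (μ i).withDensity fun x => ENNReal.ofReal (f i x)) =
      (Measure.pi μ).withDensity fun x => ENNReal.ofReal (∏ i, f i (x i)) := by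
  have : ∀ i, IsFiniteMeasure ((μ i).withDensity fun x => ENNReal.ofReal (f i x)) :=
    fun i => isFiniteMeasure_withDensity_ofReal (hfi i).2
  refine Measure.pi_eq fun s hs => ?_
  rw [withDensity_apply _ (MeasurableSet.univ_pi hs)]
  rw [← lintegral_indicator (MeasurableSet.univ_pi hs)]
  have h1 : ((Set.univ.pi s).indicator fun x => ENNReal.ofReal (∏ i, f i (x i))) =
      fun x => ENNReal.ofReal (∏ i, (s i).indicator (f i) (x i)) := by
    classical
    funext x
    by_cases hx : x ∈ Set.univ.pi s
    · rw [Set.indicator_of_mem hx]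
      congr 1
      refine Finset.prod_congr rfl fun i _ => ?_
      rw [Set.indicator_of_mem (hx i trivial)]
    · rw [Set.indicator_of_notMem hx]
      simp only [Set.mem_pi, not_forall] at hx
      obtain ⟨i, _, hi⟩ := hx
      rw [Finset.prod_eq_zero (Finset.mem_univ i) (Set.indicator_of_notMem hi _)]
      simp
  rw [h1, ← ofReal_integral_eq_lintegral_ofReal, integral_fintype_prod_eq_prod,
    ENNReal.ofReal_prod_of_nonneg]
  · refine Finset.prod_congr rfl fun i _ => ?_
    rw [withDensity_apply _ (hs i), integral_indicator (hs i),
      ofReal_integral_eq_lintegral_ofReal (hfi i).integrableOn]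
    exact Filter.Eventually.of_forall (hf0 i)
  · intro i _
    exact integral_nonneg fun x => Set.indicator_nonneg (fun x _ => hf0 i x) x
  · exact Integrable.fintype_prod_dep fun i => (hfi i).indicator (hs i)
  · exact Filter.Eventually.of_forall fun x =>
      Finset.prod_nonneg fun i _ => Set.indicator_nonneg (fun x _ => hf0 i x) _

lemma aux_fano {Ω : Type*} [MeasurableSpace Ω] (P Q : Measure Ω) [IsProbabilityMeasure P]
    [IsProbabilityMeasure Q] (L : Ω → ℝ) (hLm : Measurable L) (hL : Integrable L P)
    (hQ : Q = P.withDensity fun x => ENNReal.ofReal (Real.exp (-L x)))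
    (A : Set Ω) (hA : MeasurableSet A) (M : ℝ) (hM : 1 ≤ M) :
    Real.log M * P.real A ≤ ∫ x, L x ∂P + Real.log 2 + ((1 + (M - 1) * Q.real A) / 2 - 1) := by
  have hM0 : 0 < M := by linarith
  set φ : Ω → ℝ := fun x => 1 / 2 + A.indicator (fun _ => (M - 1) / 2) x with hφ
  have hφm : Measurable φ := by
    exact measurable_const.add (measurable_const.indicator hA)
  have hφi : Integrable φ Q := 
    (integrable_const _).add ((integrable_const _).indicator hA)
  have hφQ : ∫ x, φ x ∂Q = (1 + (M - 1) * Q.real A) / 2 := by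
    rw [hφ, integral_add (integrable_const _) ((integrable_const _).indicator hA),
      integral_indicator hA]
    simp
    ring
  have hdm : Measurable fun x => ENNReal.ofReal (Real.exp (-L x)) := by fun_prop
  have hlt : ∀ᵐ x ∂P, ENNReal.ofReal (Real.exp (-L x)) < ⊤ :=
    Filter.Eventually.of_forall fun x => ENNReal.ofReal_lt_top
  have hi2 : Integrable (fun x => Real.exp (-L x) * φ x) P := by
    have := hφi
    rw [hQ, integrable_withDensity_iff_integrable_smul' hdm hlt] at this
    refine this.congr (Filter.Eventually.of_forall fun x => ?_)
    simp [ENNReal.toReal_ofReal (Real.exp_nonneg _)]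
  have he2 : ∫ x, Real.exp (-L x) * φ x ∂P = (1 + (M - 1) * Q.real A) / 2 := by
    rw [← hφQ, hQ, integral_withDensity_eq_integral_toReal_smul hdm hlt]
    refine integral_congr_ae (Filter.Eventually.of_forall fun x => ?_)
    simp [ENNReal.toReal_ofReal (Real.exp_nonneg _)]
  have hi1 : Integrable (fun x => A.indicator (fun _ => Real.log M) x - Real.log 2 - L x) P :=
    (((integrable_const _).indicator hA).sub (integrable_const _)).sub hL
  have key : ∫ x, (A.indicator (fun _ => Real.log M) x - Real.log 2 - L x) ∂P ≤
      ∫ x, (Real.exp (-L x) * φ x - 1) ∂P := by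
    refine integral_mono hi1 (hi2.sub (integrable_const _)) fun x => ?_
    have hpos : 0 < φ x := by
      simp only [hφ]
      have : 0 ≤ A.indicator (fun _ => (M - 1) / 2) x :=
        Set.indicator_nonneg (fun _ _ => by linarith) x
      linarith
    have hlog := Real.log_le_sub_one_of_pos (mul_pos (Real.exp_pos (-L x)) hpos)
    rw [Real.log_mul (Real.exp_pos _).ne' hpos.ne', Real.log_exp] at hlog
    have : Real.log (φ x) = A.indicator (fun _ => Real.log M) x - Real.log 2 := by
      by_cases hx : x ∈ A
      · simp only [hφ, Set.indicator_of_mem hx]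
        rw [← Real.log_div hM0.ne' (by norm_num)]
        congr 1; ring
      · simp only [hφ, Set.indicator_of_notMem hx]
        rw [add_zero, one_div, Real.log_inv]; ring
    simp only
    linarith
  rw [integral_sub hi2 (integrable_const _), he2, integral_sub _ hL, integral_sub _ (integrable_const _),
    integral_indicator hA] at key
  · simp at key
    linarith [mul_comm (P.real A) (Real.log M)]
  · exact (integrable_const _).indicator hA
  · exact ((integrable_const _).indicator hA).sub (integrable_const _)

lemma aux_spectral {p : ℕ} (J : Matrix (Fin p) (Fin p) ℝ) (hJ : J.IsHermitian) :
    ∃ (U : Matrix (Fin p) (Fin p) ℝ) (l : Fin p → ℝ), Uᵀ * U = 1 ∧ U * Uᵀ = 1 ∧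
      J = U * diagonal l * Uᵀ ∧ ∀ i, Module.End.HasEigenvalue (Matrix.toLin' J) (l i) := by
  refine ⟨hJ.eigenvectorUnitary, hJ.eigenvalues, ?_, ?_, ?_, ?_⟩
  · have := Unitary.coe_star_mul_self hJ.eigenvectorUnitary
    simpa [Matrix.star_eq_conjTranspose] using this
  · have := Unitary.coe_mul_star_self hJ.eigenvectorUnitary
    simpa [Matrix.star_eq_conjTranspose] using this
  · have := hJ.spectral_theorem
    rw [Unitary.conjStarAlgAut_apply] at this
    simpa [Matrix.star_eq_conjTranspose, Function.comp_def] using this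
  · intro i
    rw [Module.End.hasEigenvalue_iff_mem_spectrum, Matrix.spectrum_toLin']
    exact hJ.eigenvalues_mem_spectrum_real i

lemma aux_gauss_map {p : ℕ} (J U : Matrix (Fin p) (Fin p) ℝ) (l : Fin p → ℝ)
    (h1 : Uᵀ * U = 1) (h2 : U * Uᵀ = 1) (hJ : J = U * diagonal l * Uᵀ) (hl : ∀ i, 0 < l i) :
    gaussMeasure J = (Measure.pi fun i =>
      ProbabilityTheory.gaussianReal 0 (Real.toNNReal (1 / l i))).map (fun y => U.mulVec y) := by
  have hv : ∀ i, Real.toNNReal (1 / l i) ≠ 0 := fun i => by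
    have := hl i
    simpa using this
  have hdet2 : U.det * U.det = 1 := by
    have := congrArg Matrix.det h1
    simpa using this
  have hdet : U.det ≠ 0 := by
    intro h; simp [h] at hdet2
  have habs : |U.det| = 1 := by
    have : |U.det| * |U.det| = 1 := by rw [← abs_mul, hdet2, abs_one]
    nlinarith [abs_nonneg U.det]
  have hT : Measurable (fun y : Fin p → ℝ => U.mulVec y) := by
    exact (Continuous.matrix_mulVec continuous_const continuous_id).measurable
  have hmp : MeasurePreserving (fun y : Fin p → ℝ => U.mulVec y) volume volume := by
    refine ⟨hT, ?_⟩
    have := Real.map_matrix_volume_pi_eq_smul_volume_pi hdet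
    rw [abs_inv, habs] at this
    have h3 : (Measure.map (⇑(toLin' U)) (volume : Measure (Fin p → ℝ))) = volume := by
      simpa using this
    exact h3
  have hpi : (Measure.pi fun i => ProbabilityTheory.gaussianReal 0 (Real.toNNReal (1 / l i))) =
      (volume : Measure (Fin p → ℝ)).withDensity fun y => ENNReal.ofReal (∏ i,
        ProbabilityTheory.gaussianPDFReal 0 (Real.toNNReal (1 / l i)) (y i)) := by
    rw [volume_pi, ← aux_pi_withDensity]
    · congr 1; funext i
      rw [ProbabilityTheory.gaussianReal_of_var_ne_zero _ (hv i)]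
      rfl
    · intro i x; exact ProbabilityTheory.gaussianPDFReal_nonneg _ _ _
    · intro i; exact ProbabilityTheory.integrable_gaussianPDFReal _ _
  have hdetJ : J.det = ∏ i, l i := by
    rw [hJ, Matrix.det_mul, Matrix.det_mul, Matrix.det_diagonal, Matrix.det_transpose]
    linear_combination (∏ i, l i) * hdet2
  have hdens : ∀ y : Fin p → ℝ, gaussDensity J (U.mulVec y) =
      ∏ i, ProbabilityTheory.gaussianPDFReal 0 (Real.toNNReal (1 / l i)) (y i) := by
    intro y
    have hq : U.mulVec y ⬝ᵥ J.mulVec (U.mulVec y) = ∑ i, l i * y i ^ 2 := by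
      rw [hJ, Matrix.mulVec_mulVec, Matrix.mul_assoc, h1, Matrix.mul_one, ← Matrix.mulVec_mulVec,
        Matrix.dotProduct_mulVec, Matrix.vecMul_mulVec, h1, Matrix.vecMul_one]
      simp [dotProduct, Matrix.mulVec_diagonal]
      refine Finset.sum_congr rfl fun i _ => by ring
    rw [gaussDensity, hq, hdetJ]
    simp only [ProbabilityTheory.gaussianPDFReal]
    rw [Finset.prod_mul_distrib, ← Real.exp_sum]
    congr 1
    · rw [← Real.finsetProd_rpow _ _ (fun i _ => (hl i).le)]
      have : (2 * Real.pi) ^ (-(p : ℝ) / 2) = ∏ i : Fin p, (2 * Real.pi) ^ (-(1 : ℝ) / 2) := by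
        rw [Finset.prod_const, Finset.card_univ, Fintype.card_fin, ← Real.rpow_natCast,
          ← Real.rpow_mul (by positivity)]
        congr 1; ring
      rw [this, ← Finset.prod_mul_distrib]
      refine Finset.prod_congr rfl fun i _ => ?_
      have := hl i
      rw [Real.coe_toNNReal _ (by positivity), ← Real.sqrt_eq_rpow, neg_div, Real.rpow_neg (by positivity),
        ← Real.sqrt_eq_rpow, mul_one_div, Real.sqrt_div (by positivity)]
      field_simp
    · congr 1
      rw [Finset.mul_sum]
      refine Finset.sum_congr rfl fun i _ => ?_
      have := hl i
      rw [Real.coe_toNNReal _ (by positivity)]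
      field_simp
      ring
  have hdm : Measurable fun x => ENNReal.ofReal (gaussDensity J x) := by
    unfold gaussDensity
    have : Continuous fun x : Fin p → ℝ => x ⬝ᵥ J.mulVec x :=
      continuous_id.dotProduct (Continuous.matrix_mulVec continuous_const continuous_id)
    have := this.measurable
    fun_prop
  ext s hs
  rw [Measure.map_apply hT hs, hpi, gaussMeasure, withDensity_apply _ hs,
    withDensity_apply _ (hT hs), ← hmp.setLIntegral_comp_preimage hs hdm]
  simp only [hdens]

lemma aux_single {p : ℕ} (J U : Matrix (Fin p) (Fin p) ℝ) (l : Fin p → ℝ)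
    (h1 : Uᵀ * U = 1) (h2 : U * Uᵀ = 1) (hJ : J = U * diagonal l * Uᵀ) (c : ℝ) (hc : 0 < c)
    (hl : ∀ i, c ≤ l i) :
    IsProbabilityMeasure (gaussMeasure J) ∧ ∃ L : (Fin p → ℝ) → ℝ, Measurable L ∧
      Integrable L (gaussMeasure J) ∧
      ∫ x, L x ∂(gaussMeasure J) ≤ (∑ i, (l i - 1) ^ 2) / (2 * c) ∧
      gaussMeasure 1 = (gaussMeasure J).withDensity fun x => ENNReal.ofReal (Real.exp (-L x)) := by
  have hl0 : ∀ i, 0 < l i := fun i => hc.trans_le (hl i)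
  have hmap := aux_gauss_map J U l h1 h2 hJ hl0
  have hT : Measurable (fun y : Fin p → ℝ => U.mulVec y) :=
    (Continuous.matrix_mulVec continuous_const continuous_id).measurable
  have hprob : IsProbabilityMeasure (gaussMeasure J) := by
    rw [hmap]
    exact Measure.isProbabilityMeasure_map hT.aemeasurable
  have hdetJ : J.det = ∏ i, l i := by
    have hdet2 : U.det * U.det = 1 := by
      have := congrArg Matrix.det h1
      simpa using this
    rw [hJ, Matrix.det_mul, Matrix.det_mul, Matrix.det_diagonal, Matrix.det_transpose]
    linear_combination (∏ i, l i) * hdet2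
  have hdpos : 0 < J.det := by rw [hdetJ]; exact Finset.prod_pos fun i _ => hl0 i
  set L : (Fin p → ℝ) → ℝ := fun x =>
    1 / 2 * Real.log J.det - 1 / 2 * (x ⬝ᵥ J.mulVec x - x ⬝ᵥ x) with hLdef
  have hqm : Measurable fun x : Fin p → ℝ => x ⬝ᵥ J.mulVec x :=
    (continuous_id.dotProduct (Continuous.matrix_mulVec continuous_const continuous_id)).measurable
  have hqm1 : Measurable fun x : Fin p → ℝ => x ⬝ᵥ x :=
    (continuous_id.dotProduct continuous_id).measurable
  have hLm : Measurable L := by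
    rw [hLdef]; fun_prop
  have hLU : ∀ y : Fin p → ℝ, L (U.mulVec y) =
      ∑ i, (1 / 2 * Real.log (l i) - 1 / 2 * (l i - 1) * y i ^ 2) := by
    intro y
    have hq : U.mulVec y ⬝ᵥ J.mulVec (U.mulVec y) = ∑ i, l i * y i ^ 2 := by
      rw [hJ, Matrix.mulVec_mulVec, Matrix.mul_assoc, h1, Matrix.mul_one, ← Matrix.mulVec_mulVec,
        Matrix.dotProduct_mulVec, Matrix.vecMul_mulVec, h1, Matrix.vecMul_one]
      simp [dotProduct, Matrix.mulVec_diagonal]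
      refine Finset.sum_congr rfl fun i _ => by ring
    have hq1 : U.mulVec y ⬝ᵥ U.mulVec y = ∑ i, y i ^ 2 := by
      rw [Matrix.dotProduct_mulVec, Matrix.vecMul_mulVec, h1, Matrix.vecMul_one]
      simp [dotProduct, pow_two]
    simp only [hLdef]
    rw [hq, hq1, hdetJ, Real.log_prod (fun i _ => (hl0 i).ne'), ← Finset.sum_sub_distrib,
      Finset.mul_sum, Finset.mul_sum, ← Finset.sum_sub_distrib]
    refine Finset.sum_congr rfl fun i _ => by ring
  have hsq : ∀ i, Integrable (fun y : ℝ => y ^ 2)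
      (ProbabilityTheory.gaussianReal 0 (Real.toNNReal (1 / l i))) := fun i =>
    (ProbabilityTheory.memLp_id_gaussianReal (μ := 0) (v := Real.toNNReal (1 / l i)) 2).integrable_sq
  have hsqv : ∀ i, ∫ y : ℝ, y ^ 2
      ∂(ProbabilityTheory.gaussianReal 0 (Real.toNNReal (1 / l i))) = 1 / l i := by
    intro i
    have := ProbabilityTheory.variance_id_gaussianReal (μ := 0) (v := Real.toNNReal (1 / l i))
    rw [ProbabilityTheory.variance_of_integral_eq_zero aemeasurable_id
      (by simp)] at this
    rw [Real.coe_toNNReal _ (one_div_nonneg.2 (hl0 i).le)] at this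
    simpa using this
  have hterm : ∀ i, Integrable (fun y : ℝ => 1 / 2 * Real.log (l i) - 1 / 2 * (l i - 1) * y ^ 2)
      (ProbabilityTheory.gaussianReal 0 (Real.toNNReal (1 / l i))) := fun i =>
    (integrable_const _).sub ((hsq i).const_mul _)
  have hterm' : ∀ i, Integrable
      (fun y : Fin p → ℝ => 1 / 2 * Real.log (l i) - 1 / 2 * (l i - 1) * y i ^ 2)
      (Measure.pi fun i => ProbabilityTheory.gaussianReal 0 (Real.toNNReal (1 / l i))) := fun i =>
    integrable_comp_eval
      (μ := fun i => ProbabilityTheory.gaussianReal 0 (Real.toNNReal (1 / l i)))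
      (f := fun y : ℝ => 1 / 2 * Real.log (l i) - 1 / 2 * (l i - 1) * y ^ 2) (hterm i)
  have hLi : Integrable L (gaussMeasure J) := by
    rw [hmap, integrable_map_measure hLm.aestronglyMeasurable hT.aemeasurable]
    have : L ∘ (fun y => U.mulVec y) = fun y =>
      ∑ i, (1 / 2 * Real.log (l i) - 1 / 2 * (l i - 1) * y i ^ 2) := funext hLU
    rw [this]
    exact integrable_finsetSum _ fun i _ => hterm' i
  refine ⟨hprob, L, hLm, hLi, ?_, ?_⟩
  · rw [hmap, integral_map hT.aemeasurable hLm.aestronglyMeasurable]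
    simp only [hLU]
    rw [integral_finsetSum _ fun i _ => hterm' i, Finset.sum_div]
    refine Finset.sum_le_sum fun i _ => ?_
    rw [integral_comp_eval (μ := fun i => ProbabilityTheory.gaussianReal 0 (Real.toNNReal (1 / l i)))
      (f := fun y : ℝ => 1 / 2 * Real.log (l i) - 1 / 2 * (l i - 1) * y ^ 2)
      (hterm i).aestronglyMeasurable, integral_sub (integrable_const _) ((hsq i).const_mul _),
      integral_const_mul (1 / 2 * (l i - 1)), hsqv]
    simp only [integral_const, probReal_univ, one_smul]
    have hlog := Real.log_le_sub_one_of_pos (hl0 i)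
    have h3 : (l i - 1) ^ 2 / (2 * l i) ≤ (l i - 1) ^ 2 / (2 * c) := by
      gcongr
      exact hl i
    refine le_trans ?_ h3
    have h4 : (l i - 1) ^ 2 / (2 * l i) =
        1 / 2 * (l i - 1) - 1 / 2 * (l i - 1) * (1 / l i) := by
      have := hl0 i
      field_simp
    rw [h4]; linarith
  · have hdm : Measurable fun x => ENNReal.ofReal (gaussDensity J x) := by
      unfold gaussDensity
      fun_prop
    have hem : Measurable fun x => ENNReal.ofReal (Real.exp (-L x)) := by fun_prop
    rw [gaussMeasure, gaussMeasure, ← withDensity_mul _ hdm hem]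
    congr 1
    funext x
    rw [Pi.mul_apply, ← ENNReal.ofReal_mul]
    · congr 1
      simp only [gaussDensity, hLdef, Matrix.det_one, Real.one_rpow, Matrix.one_mulVec]
      have : J.det ^ ((1 : ℝ) / 2) = Real.exp (1 / 2 * Real.log J.det) := by
        rw [Real.rpow_def_of_pos hdpos, mul_comm]
      rw [this, one_mul, mul_comm (Real.exp _), mul_assoc, mul_assoc, ← Real.exp_add, ← Real.exp_add]
      congr 2
      ring
    · unfold gaussDensity; positivity

lemma aux_graph {p : ℕ} (d : ℕ) (θ : ℝ) (hθ : 0 < θ) (hdθ : (d : ℝ) * θ < 1)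
    (G : SimpleGraph (Fin p)) [DecidableRel G.Adj] (hG : ∀ v, G.degree v ≤ d) :
    IsProbabilityMeasure (gaussMeasure (1 + θ • G.adjMatrix ℝ)) ∧
      ∃ L : (Fin p → ℝ) → ℝ, Measurable L ∧
      Integrable L (gaussMeasure (1 + θ • G.adjMatrix ℝ)) ∧
      ∫ x, L x ∂(gaussMeasure (1 + θ • G.adjMatrix ℝ)) ≤ (θ ^ 2 * (d * p)) / (2 * (1 - d * θ)) ∧
      gaussMeasure 1 = (gaussMeasure (1 + θ • G.adjMatrix ℝ)).withDensity
        fun x => ENNReal.ofReal (Real.exp (-L x)) := by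
  set E := G.adjMatrix ℝ with hE
  set J := 1 + θ • E with hJd
  have hEs : Eᵀ = E := by rw [hE]; exact G.transpose_adjMatrix 
  have hJ : J.IsHermitian := by
    rw [Matrix.IsHermitian, Matrix.conjTranspose_eq_transpose_of_trivial, hJd]
    simp [hEs]
  obtain ⟨U, l, h1, h2, hJe, hev⟩ := aux_spectral J hJ
  have hrow : ∀ k, ∑ j, E k j ≤ (d : ℝ) := by
    intro k
    have : ∑ j, E k j = (G.degree k : ℝ) := by
      rw [← SimpleGraph.card_neighborFinset_eq_degree, SimpleGraph.neighborFinset_eq_filter]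
      simp [hE, SimpleGraph.adjMatrix_apply, Finset.sum_boole]
    rw [this]; exact_mod_cast hG k
  have hl : ∀ i, 1 - d * θ ≤ l i := by
    intro i
    obtain ⟨k, hk⟩ := eigenvalue_mem_ball (hev i)
    rw [Metric.mem_closedBall, Real.dist_eq] at hk
    have hkk : J k k = 1 := by simp [hJd, hE]
    have hs : ∑ j ∈ Finset.univ.erase k, ‖J k j‖ ≤ d * θ := by
      calc ∑ j ∈ Finset.univ.erase k, ‖J k j‖ = ∑ j ∈ Finset.univ.erase k, θ * E k j := by
            refine Finset.sum_congr rfl fun j hj => ?_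
            have hjk : k ≠ j := (Finset.ne_of_mem_erase hj).symm
            have : 0 ≤ E k j := by
              simp only [hE, SimpleGraph.adjMatrix_apply]; split_ifs <;> norm_num
            simp only [hJd, Matrix.add_apply, Matrix.one_apply_ne hjk, zero_add, Matrix.smul_apply,
              smul_eq_mul]
            exact Real.norm_of_nonneg (by positivity)
        _ ≤ ∑ j, θ * E k j := by
            refine Finset.sum_le_sum_of_subset_of_nonneg (Finset.erase_subset _ _) fun j _ _ => ?_
            have : 0 ≤ E k j := by
              simp only [hE, SimpleGraph.adjMatrix_apply]; split_ifs <;> norm_num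
            positivity
        _ ≤ d * θ := by
            rw [← Finset.mul_sum, mul_comm]
            exact mul_le_mul_of_nonneg_right (hrow k) hθ.le
    rw [hkk] at hk
    have := (abs_le.1 hk).1
    linarith
  have hc : 0 < 1 - d * θ := by linarith
  have htr : ∑ i, (l i - 1) ^ 2 ≤ θ ^ 2 * (d * p) := by
    have e1 : θ • E = U * diagonal (fun i => l i - 1) * Uᵀ := by
      have : diagonal (fun i => l i - 1) = diagonal l - 1 := by
        rw [← Matrix.diagonal_one, Matrix.diagonal_sub]
      rw [this, Matrix.mul_sub, Matrix.sub_mul, ← hJe, Matrix.mul_one, h2, hJd]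
      simp
    have e2 : (θ • E) * (θ • E) = U * diagonal (fun i => (l i - 1) * (l i - 1)) * Uᵀ := by
      rw [e1, ← Matrix.diagonal_mul_diagonal]
      calc _ = U * diagonal (fun i => l i - 1) * (Uᵀ * U) * diagonal (fun i => l i - 1) * Uᵀ := by
            simp only [Matrix.mul_assoc]
        _ = _ := by rw [h1, Matrix.mul_one]; simp only [Matrix.mul_assoc]
    have e3 := congrArg Matrix.trace e2
    rw [Matrix.trace_mul_comm (U * _), ← Matrix.mul_assoc, h1, Matrix.one_mul, Matrix.trace_diagonal] at e3
    have e4 : ((θ • E) * (θ • E)).trace = θ ^ 2 * ∑ k, ∑ j, E k j := by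
      rw [Matrix.smul_mul, Matrix.mul_smul, smul_smul, Matrix.trace_smul, smul_eq_mul, ← pow_two]
      congr 1
      simp only [Matrix.trace, Matrix.diag, Matrix.mul_apply]
      refine Finset.sum_congr rfl fun k _ => Finset.sum_congr rfl fun j _ => ?_
      simp only [hE, SimpleGraph.adjMatrix_apply, G.adj_comm j k]
      split_ifs <;> norm_num
    simp only [pow_two (l _ - 1)]
    rw [← e3, e4]
    refine mul_le_mul_of_nonneg_left ?_ (by positivity)
    calc ∑ k, ∑ j, E k j ≤ ∑ k : Fin p, (d : ℝ) := Finset.sum_le_sum fun k _ => hrow k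
      _ = d * p := by simp [mul_comm]
  obtain ⟨hp, L, a, b, c, e⟩ := aux_single J U l h1 h2 hJe _ hc hl
  refine ⟨hp, L, a, b, c.trans ?_, e⟩
  gcongr

lemma aux_product {p : ℕ} (J : Matrix (Fin p) (Fin p) ℝ) (n : ℕ)
    [IsProbabilityMeasure (gaussMeasure J)]
    [IsProbabilityMeasure (gaussMeasure (1 : Matrix (Fin p) (Fin p) ℝ))]
    (L : (Fin p → ℝ) → ℝ) (hLm : Measurable L) (hLi : Integrable L (gaussMeasure J)) (K : ℝ)
    (hK : ∫ x, L x ∂(gaussMeasure J) ≤ K)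
    (hd : gaussMeasure 1 = (gaussMeasure J).withDensity fun x => ENNReal.ofReal (Real.exp (-L x)))
    (A : Set (Fin n → Fin p → ℝ)) (hA : MeasurableSet A) (M : ℝ) (hM : 1 ≤ M) :
    Real.log M * (Measure.pi fun _ : Fin n => gaussMeasure J).real A ≤ n * K + Real.log 2 +
      ((1 + (M - 1) * (Measure.pi fun _ : Fin n =>
        gaussMeasure (1 : Matrix (Fin p) (Fin p) ℝ)).real A) / 2 - 1) := by
  have hi : ∀ i : Fin n, Integrable (fun x : Fin n → Fin p → ℝ => L (x i))
      (Measure.pi fun _ : Fin n => gaussMeasure J) := fun i =>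
    integrable_comp_eval (μ := fun _ : Fin n => gaussMeasure J) (f := L) hLi
  have hexp : Integrable (fun x => Real.exp (-L x)) (gaussMeasure J) := by
    refine ⟨(by fun_prop : Measurable fun x => Real.exp (-L x)).aestronglyMeasurable, ?_⟩
    rw [hasFiniteIntegral_iff_ofReal (Filter.Eventually.of_forall fun x => Real.exp_nonneg _)]
    have h := measure_univ (μ := gaussMeasure (1 : Matrix (Fin p) (Fin p) ℝ))
    rw [hd, withDensity_apply _ MeasurableSet.univ, Measure.restrict_univ] at h
    rw [h]; exact ENNReal.one_lt_top
  have hQ : (Measure.pi fun _ : Fin n => gaussMeasure (1 : Matrix (Fin p) (Fin p) ℝ)) =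
      (Measure.pi fun _ : Fin n => gaussMeasure J).withDensity
        fun x => ENNReal.ofReal (Real.exp (-(∑ i, L (x i)))) := by
    have := aux_pi_withDensity (fun _ : Fin n => gaussMeasure J)
      (fun _ x => Real.exp (-L x)) (fun _ _ => Real.exp_nonneg _) (fun _ => hexp)
    rw [← hd] at this
    rw [this]
    simp only [← Real.exp_sum, Finset.sum_neg_distrib]
  have := aux_fano (Measure.pi fun _ : Fin n => gaussMeasure J) _ (fun x => ∑ i, L (x i))
    (by fun_prop) (integrable_finsetSum _ fun i _ => hi i) hQ A hA M hM
  refine this.trans ?_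
  have hint : ∫ x, ∑ i, L (x i) ∂(Measure.pi fun _ : Fin n => gaussMeasure J) ≤ n * K := by
    rw [integral_finsetSum _ fun i _ => hi i]
    calc _ ≤ ∑ i : Fin n, K := by
          refine Finset.sum_le_sum fun i _ => ?_
          rw [integral_comp_eval (μ := fun _ : Fin n => gaussMeasure J) (f := L)
            hLi.aestronglyMeasurable]
          exact hK
      _ = n * K := by simp
  linarith

/-- Finite-sample form of the necessary sample-complexity bound (Proposition 1): for a family
`𝔐` of adjacency matrices of graphs on `p` vertices of maximum degree at most `d` with
`|𝔐| ≥ m^{dp/2}` and the Gaussian measures `μ_E` with precision matrices `I + θE`, if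
`n < (1−δ) log m / (2 (θ/(1−dθ))²)`, then any measurable decoder satisfies
`max_{E∈𝔐} μ_E^{⊗n}[ψ ≠ E] ≥ δ − 1/log|𝔐|`. -/
theorem stmt_6 {p : ℕ} (d : ℕ) (θ : ℝ) (hθ : 0 < θ) (hdθ : (d : ℝ) * θ < 1)
    (𝔐 : Finset (Matrix (Fin p) (Fin p) ℝ)) (hcard : 2 ≤ 𝔐.card)
    (hgraph : ∀ E ∈ 𝔐, ∃ (G : SimpleGraph (Fin p)) (_ : DecidableRel G.Adj),
      E = G.adjMatrix ℝ ∧ ∀ v, G.degree v ≤ d)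
    (m : ℝ) (hm : 1 < m) (hsize : m ^ ((d : ℝ) * p / 2) ≤ (𝔐.card : ℝ))
    (n : ℕ) (δ : ℝ) (hδ : δ ∈ Set.Ioo (0 : ℝ) 1)
    (ψ : (Fin n → (Fin p → ℝ)) → Matrix (Fin p) (Fin p) ℝ)
    (hψ : Measurable fun xs (i j : Fin p) => ψ xs i j)
    (hcond : (n : ℝ) < (1 - δ) * Real.log m / (2 * (θ / (1 - d * θ)) ^ 2)) :
    ∃ E ∈ 𝔐, ENNReal.ofReal (δ - 1 / Real.log 𝔐.card) ≤
      (Measure.pi fun _ : Fin n => gaussMeasure (1 + θ • E)) {xs | ψ xs ≠ E} := by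
  classical
  obtain ⟨hδ0, hδ1⟩ := hδ
  have hγ : IsProbabilityMeasure (gaussMeasure (1 : Matrix (Fin p) (Fin p) ℝ)) :=
    (aux_single 1 1 (fun _ => 1) (by simp) (by simp) (by simp) 1 one_pos (fun _ => le_rfl)).1
  have hc : 0 < 1 - d * θ := by linarith
  have hM2 : (2 : ℝ) ≤ 𝔐.card := by exact_mod_cast hcard
  have hlogM : 0 < Real.log 𝔐.card := Real.log_pos (by linarith)
  have hlogm : 0 < Real.log m := Real.log_pos hm
  set K : ℝ := (θ ^ 2 * (d * p)) / (2 * (1 - d * θ)) with hKdef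
  have hsz : (d : ℝ) * p / 2 * Real.log m ≤ Real.log 𝔐.card := by
    rw [← Real.log_rpow (by linarith)]
    exact Real.log_le_log (Real.rpow_pos_of_pos (by linarith) _) hsize
  have hnK : n * K ≤ (1 - δ) * Real.log 𝔐.card := by
    have hr : 0 < θ / (1 - d * θ) := div_pos hθ hc
    rw [lt_div_iff₀ (by positivity)] at hcond
    have hdp : (0 : ℝ) ≤ d * p := by positivity
    have hK : K ≤ d * p / 2 * (2 * (θ / (1 - d * θ)) ^ 2) := by
      have e : (d : ℝ) * p / 2 * (2 * (θ / (1 - d * θ)) ^ 2) =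
          K * (2 / (1 - d * θ)) := by
        rw [hKdef]; field_simp
      have hK0 : 0 ≤ K := by positivity
      rw [e]
      have : 1 ≤ 2 / (1 - d * θ) := by
        rw [le_div_iff₀ hc]
        have : 0 ≤ d * θ := by positivity
        linarith
      nlinarith
    calc n * K ≤ n * (d * p / 2 * (2 * (θ / (1 - d * θ)) ^ 2)) := by gcongr
      _ = d * p / 2 * (n * (2 * (θ / (1 - d * θ)) ^ 2)) := by ring
      _ ≤ d * p / 2 * ((1 - δ) * Real.log m) := by gcongr
      _ = (1 - δ) * (d * p / 2 * Real.log m) := by ring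
      _ ≤ (1 - δ) * Real.log 𝔐.card := by
        exact mul_le_mul_of_nonneg_left hsz (by linarith)
  have hAm : ∀ E : Matrix (Fin p) (Fin p) ℝ, MeasurableSet {xs | ψ xs = E} := by
    intro E
    exact hψ (measurableSet_singleton (fun i j => E i j))
  set Q := Measure.pi fun _ : Fin n => gaussMeasure (1 : Matrix (Fin p) (Fin p) ℝ) with hQdef
  have hQsum : ∑ E ∈ 𝔐, Q.real {xs | ψ xs = E} ≤ 1 := by
    rw [← measureReal_biUnion_finset]
    · exact measureReal_le_one
    · intro E _ F _ hEF
      refine Set.disjoint_left.2 fun x hx hx' => hEF ?_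
      exact (show ψ x = E from hx).symm.trans hx'
    · intro E _; exact hAm E
  by_contra! hcon
  have hall : ∀ E ∈ 𝔐, Real.log 𝔐.card * (1 - (δ - 1 / Real.log 𝔐.card)) <
      n * K + Real.log 2 + ((1 + ((𝔐.card : ℝ) - 1) * Q.real {xs | ψ xs = E}) / 2 - 1) := by
    intro E hE
    obtain ⟨G, hdec, rfl, hdeg⟩ := hgraph E hE
    obtain ⟨hP, L, hLm, hLi, hK, hd⟩ := aux_graph d θ hθ hdθ G hdeg
    have h1 := aux_product _ n L hLm hLi K hK hd _ (hAm (G.adjMatrix ℝ)) 𝔐.card (by linarith)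
    refine lt_of_lt_of_le ?_ h1
    refine mul_lt_mul_of_pos_left ?_ hlogM
    have h2 := hcon _ hE
    have h3 : {xs | ψ xs ≠ G.adjMatrix ℝ} = {xs | ψ xs = G.adjMatrix ℝ}ᶜ := rfl
    rw [h3] at h2
    have h4 := probReal_compl_eq_one_sub
      (μ := Measure.pi fun _ : Fin n => gaussMeasure (1 + θ • G.adjMatrix ℝ)) (hAm (G.adjMatrix ℝ))
    have h5 := (ENNReal.lt_ofReal_iff_toReal_lt (measure_ne_top _ _)).1 h2
    rw [← measureReal_def, h4] at h5
    linarith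
  have hne : 𝔐.Nonempty := Finset.card_pos.1 (by omega)
  have hs := Finset.sum_lt_sum_of_nonempty hne hall
  rw [Finset.sum_const, nsmul_eq_mul, Finset.sum_add_distrib, Finset.sum_const, nsmul_eq_mul,
    Finset.sum_sub_distrib, ← Finset.sum_div, Finset.sum_add_distrib, ← Finset.mul_sum,
    Finset.sum_const, nsmul_eq_mul] at hs
  have h6 : Real.log 𝔐.card * (1 - (δ - 1 / Real.log 𝔐.card)) =
      (1 - δ) * Real.log 𝔐.card + 1 := by field_simp; ring
  rw [h6] at hs
  have hl2 : Real.log 2 ≤ 1 := by linarith [Real.log_two_lt_d9]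
  have h7 : ((𝔐.card : ℝ) - 1) * ∑ E ∈ 𝔐, Q.real {xs | ψ xs = E} ≤ ((𝔐.card : ℝ) - 1) * 1 :=
    mul_le_mul_of_nonneg_left hQsum (by linarith)
  have h8 : (𝔐.card : ℝ) * (n * K + Real.log 2) ≤
      (𝔐.card : ℝ) * ((1 - δ) * Real.log 𝔐.card + 1) :=
    mul_le_mul_of_nonneg_left (by linarith) (by linarith)
  simp only [nsmul_eq_mul, mul_one] at hs
  linarith
end

section
/- (Correlation decay lemma.) Let G be a simple graph on a finite vertex set V with maximum degree at most d ≥ 1 and adjacency matrix E, let θ > 0 with dθ < 1/2, and set J = I + θE. Let H ⊆ F ⊆ V, write blocks of matrices with respect to index subsets, and let ζ ≥ 1 be an integer such that E[H, F∖H] · (E[F∖H, F∖H])^i · E[F∖H, V∖F] = 0 for every integer 0 ≤ i ≤ ζ−1 (this holds in particular when the graph distance in G between every vertex of H and every vertex of V∖F is large enough). Then the spectral norm satisfies ‖ J[H, F∖H] · (J[F∖H, F∖H])⁻¹ · J[F∖H, V∖F] ‖ ≤ (θd)^{ζ+2} / (1 − θd). -/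
open Matrix

/-- The spectral norm (ℓ²-operator norm) of a real matrix. -/
noncomputable def specNorm {m n : Type*} [Fintype m] [Fintype n] [DecidableEq n]
    (M : Matrix m n ℝ) : ℝ :=
  ‖LinearMap.toContinuousLinearMap (Matrix.toEuclideanLin M)‖

/-- The block of a matrix `M` indexed by two subsets `S`, `T` of its index set:
`blk M S T = M[S,T]`. -/
def blk {V : Type*} (M : Matrix V V ℝ) (S T : Finset V) : Matrix S T ℝ :=
  Matrix.of fun i j => M i.1 j.1

open scoped Matrix.Norms.L2Operator in
lemma schur_test_aux {m n : Type*} [Fintype m] [Fintype n] [DecidableEq n]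
    (M : Matrix m n ℝ) (r : ℝ) (hr : 0 ≤ r) (h0 : ∀ i j, 0 ≤ M i j)
    (hrow : ∀ i, ∑ j, M i j ≤ r) (hcol : ∀ j, ∑ i, M i j ≤ r) : ‖M‖ ≤ r := by
  rw [Matrix.l2_opNorm_def]
  refine ContinuousLinearMap.opNorm_le_bound _ hr fun x => ?_
  refine le_of_sq_le_sq ?_ (by positivity)
  rw [mul_pow, EuclideanSpace.real_norm_sq_eq, EuclideanSpace.real_norm_sq_eq]
  have key : ∀ i, (∑ j, M i j * x j) ^ 2 ≤ r * ∑ j, M i j * x j ^ 2 := by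
    intro i
    have h := Finset.sum_sq_le_sum_mul_sum_of_sq_le_mul Finset.univ (r := fun j => M i j * x j)
      (f := fun j => M i j) (g := fun j => M i j * x j ^ 2)
      (fun j _ => h0 i j) (fun j _ => mul_nonneg (h0 i j) (sq_nonneg _)) (fun j _ => le_of_eq (by ring))
    refine h.trans (mul_le_mul_of_nonneg_right (hrow i) ?_)
    exact Finset.sum_nonneg fun j _ => mul_nonneg (h0 i j) (sq_nonneg _)
  calc _ = ∑ i, (∑ j, M i j * x j) ^ 2 := by
        refine Finset.sum_congr rfl fun i _ => ?_
        rfl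
    _ ≤ ∑ i, r * ∑ j, M i j * x j ^ 2 := Finset.sum_le_sum fun i _ => key i
    _ = r * ∑ j, (∑ i, M i j) * x j ^ 2 := by
        rw [← Finset.mul_sum, Finset.sum_comm]
        simp_rw [Finset.sum_mul]
    _ ≤ r * ∑ j, r * x j ^ 2 := by
        gcongr with j _
        exact hcol j
    _ = r ^ 2 * ∑ j, x j ^ 2 := by rw [← Finset.mul_sum]; ring

lemma adj_row_aux {V : Type*} [Fintype V] [DecidableEq V]
    (G : SimpleGraph V) [DecidableRel G.Adj] (d : ℕ) (hdeg : ∀ v, G.degree v ≤ d)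
    (T : Finset V) (v : V) : ∑ j : T, G.adjMatrix ℝ v j ≤ d := by
  rw [Finset.sum_coe_sort T (fun j => G.adjMatrix ℝ v j)]
  calc _ ≤ ∑ j, G.adjMatrix ℝ v j :=
        Finset.sum_le_sum_of_subset_of_nonneg (Finset.subset_univ _) fun j _ _ => by
          rw [SimpleGraph.adjMatrix_apply]; split_ifs <;> norm_num
    _ = G.degree v := by simp [SimpleGraph.adjMatrix_apply, Finset.sum_boole,
          ← SimpleGraph.card_neighborFinset_eq_degree, SimpleGraph.neighborFinset_eq_filter]
    _ ≤ d := by exact_mod_cast hdeg v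

open scoped Matrix.Norms.L2Operator in
lemma blk_norm_aux {V : Type*} [Fintype V] [DecidableEq V]
    (G : SimpleGraph V) [DecidableRel G.Adj] (d : ℕ) (hdeg : ∀ v, G.degree v ≤ d)
    (θ : ℝ) (hθ : 0 < θ) (S T : Finset V) : ‖θ • blk (G.adjMatrix ℝ) S T‖ ≤ θ * d := by
  rw [norm_smul, Real.norm_of_nonneg hθ.le]
  refine mul_le_mul_of_nonneg_left ?_ hθ.le
  refine schur_test_aux _ _ (by positivity) ?_ ?_ ?_
  · intro i j
    simp only [blk, Matrix.of_apply, SimpleGraph.adjMatrix_apply]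
    split_ifs <;> norm_num
  · intro i
    exact adj_row_aux G d hdeg T i
  · intro j
    refine le_trans (le_of_eq ?_) (adj_row_aux G d hdeg S j)
    refine Finset.sum_congr rfl fun i _ => ?_
    simp [blk, SimpleGraph.adjMatrix_apply, G.adj_comm]

lemma blk_off_aux {V : Type*} [DecidableEq V] (E : Matrix V V ℝ) (θ : ℝ)
    (S T : Finset V) (h : Disjoint S T) : blk (1 + θ • E) S T = θ • blk E S T := by
  ext i j
  have : i.1 ≠ j.1 := fun e => Finset.disjoint_left.1 h i.2 (e ▸ j.2)
  simp [blk, Matrix.one_apply, this]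

lemma blk_diag_aux {V : Type*} [DecidableEq V] (E : Matrix V V ℝ) (θ : ℝ)
    (S : Finset V) : blk (1 + θ • E) S S = 1 + θ • blk E S S := by
  ext i j
  simp only [blk, Matrix.of_apply, Matrix.add_apply, Matrix.smul_apply, Matrix.one_apply,
    Subtype.ext_iff]

open scoped Matrix.Norms.L2Operator in
lemma main_aux {l m n : Type*} [Fintype l] [Fintype m] [Fintype n] [DecidableEq l]
    [DecidableEq m] [DecidableEq n]
    (A : Matrix l m ℝ) (B : Matrix m m ℝ) (C : Matrix m n ℝ) (r : ℝ) (hr0 : 0 ≤ r) (hr : r < 1)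
    (hA : ‖A‖ ≤ r) (hB : ‖B‖ ≤ r) (hC : ‖C‖ ≤ r) (k : ℕ) (hk : 1 ≤ k)
    (hz : ∀ i < k, A * B ^ i * C = 0) :
    ‖A * (1 + B)⁻¹ * C‖ ≤ r ^ (k + 2) / (1 - r) := by
  have hu : IsUnit (1 + B) := by
    have : CompleteSpace (Matrix m m ℝ) := FiniteDimensional.complete ℝ _
    have := isUnit_one_sub_of_norm_lt_one (x := -B) (by rw [norm_neg]; linarith)
    simpa using this
  have hdet : IsUnit (1 + B).det := (Matrix.isUnit_iff_isUnit_det _).1 hu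
  set X := (1 + B)⁻¹ with hX
  have hX1 : X = 1 - B * X := by
    have := Matrix.mul_nonsing_inv (1 + B) hdet
    rw [← hX, add_mul, one_mul] at this
    exact eq_sub_of_add_eq this
  have h1 : ‖(1 : Matrix m m ℝ)‖ ≤ 1 := by
    rw [← Matrix.diagonal_one, Matrix.l2_opNorm_diagonal]
    exact (pi_norm_le_iff_of_nonneg zero_le_one).2 fun i => by simp
  have hXn : ‖X‖ ≤ 1 / (1 - r) := by
    rw [le_div_iff₀ (by linarith)]
    have : ‖X‖ ≤ 1 + r * ‖X‖ := by
      calc ‖X‖ = ‖1 - B * X‖ := by rw [← hX1]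
        _ ≤ ‖(1 : Matrix m m ℝ)‖ + ‖B * X‖ := norm_sub_le _ _
        _ ≤ 1 + r * ‖X‖ := by
          refine add_le_add h1 ((Matrix.l2_opNorm_mul _ _).trans ?_)
          gcongr
    linarith
  have hstep : ∀ j ≤ k, A * X * C = (-1 : ℝ) ^ j • (A * B ^ j * X * C) := by
    intro j
    induction j with
    | zero => intro _; simp
    | succ j ih =>
      intro hj
      rw [ih (by omega)]
      have : A * B ^ j * X * C = - (A * B ^ (j + 1) * X * C) := by
        conv_lhs => rw [hX1]
        rw [Matrix.mul_sub, Matrix.sub_mul, Matrix.mul_one, hz j (by omega), zero_sub, pow_succ]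
        simp only [Matrix.mul_assoc]
      rw [this, pow_succ (-1 : ℝ), mul_neg_one, neg_smul, smul_neg]
  rw [hstep k le_rfl, norm_smul]
  have e : ‖(-1 : ℝ) ^ k‖ = 1 := by simp
  rw [e, one_mul]
  have hBk : ‖B ^ k‖ ≤ r ^ k := (norm_pow_le' B hk).trans (by gcongr)
  calc ‖A * B ^ k * X * C‖ ≤ ‖A‖ * ‖B ^ k‖ * ‖X‖ * ‖C‖ := by
        refine (Matrix.l2_opNorm_mul _ _).trans ?_
        gcongr
        refine (Matrix.l2_opNorm_mul _ _).trans ?_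
        gcongr
        exact Matrix.l2_opNorm_mul _ _
    _ ≤ r * r ^ k * (1 / (1 - r)) * r := by
        have : 0 ≤ 1 / (1 - r) := (norm_nonneg X).trans hXn
        gcongr
    _ = r ^ (k + 2) / (1 - r) := by ring



/-- Correlation decay lemma: for `J = I + θE` with `E` the adjacency matrix of a graph with
maximum degree at most `d`, `0 < θ`, `dθ < 1/2`, and nested subsets `H ⊆ F ⊆ V` such that
`E[H,F∖H]·E[F∖H,F∖H]^i·E[F∖H,V∖F] = 0` for all `0 ≤ i ≤ ζ−1`, one has
`‖J[H,F∖H]·J[F∖H,F∖H]⁻¹·J[F∖H,V∖F]‖ ≤ (θd)^{ζ+2}/(1−θd)`. -/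
theorem stmt_7 {V : Type*} [Fintype V] [DecidableEq V]
    (G : SimpleGraph V) [DecidableRel G.Adj] (d : ℕ) (hd : 1 ≤ d)
    (hdeg : ∀ v, G.degree v ≤ d)
    (θ : ℝ) (hθ : 0 < θ) (hdθ : (d : ℝ) * θ < 1 / 2)
    (H F : Finset V) (hHF : H ⊆ F) (ζ : ℕ) (hζ : 1 ≤ ζ)
    (hzero : ∀ i : ℕ, i ≤ ζ - 1 →
      blk (G.adjMatrix ℝ) H (F \ H) * (blk (G.adjMatrix ℝ) (F \ H) (F \ H)) ^ i *
        blk (G.adjMatrix ℝ) (F \ H) Fᶜ = 0) :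
    specNorm
      (blk (1 + θ • G.adjMatrix ℝ) H (F \ H) * (blk (1 + θ • G.adjMatrix ℝ) (F \ H) (F \ H))⁻¹ *
        blk (1 + θ • G.adjMatrix ℝ) (F \ H) Fᶜ) ≤
      (θ * d) ^ (ζ + 2) / (1 - θ * d) := by

  have hr : θ * (d : ℝ) < 1 := by nlinarith
  have d1 : Disjoint H (F \ H) := Finset.disjoint_sdiff
  have d2 : Disjoint (F \ H) Fᶜ := by
    rw [Finset.disjoint_left]
    intro x hx hx'
    simp at hx hx'
    exact hx' hx.1
  rw [blk_off_aux _ _ _ _ d1, blk_off_aux _ _ _ _ d2, blk_diag_aux]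
  refine main_aux _ _ _ (θ * d) (by positivity) hr (blk_norm_aux G d hdeg θ hθ _ _)
    (blk_norm_aux G d hdeg θ hθ _ _) (blk_norm_aux G d hdeg θ hθ _ _) ζ hζ ?_
  intro i hi
  rw [smul_pow]
  simp only [Matrix.smul_mul, Matrix.mul_smul]
  rw [hzero i (by omega)]
  simp
end
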